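/- arXiv:2605.22451 — 10 statements merged into one kernel-verified Lean document; each statement's English description precedes it below -/
import Mathlib

section
/- Let f : ℝⁿ → ℝ be continuous with epigraph L := {(x,y) ∈ ℝⁿ × ℝ : f(x) ≤ y}, and let K ⊆ ℝⁿ × ℝ be a nonempty closed set with K ∩ L = ∅. If there exists a point (x₀,y₀) ∈ K with y₀ < f(x) for all x ∈ ℝⁿ, then for every x ∈ ℝⁿ there exists y ∈ ℝ with d((x,y),K) = d((x,y),L); moreover every such equidistant point (x,y) satisfies min{(|x−x₀|² + y₀² − u²)/(2(y₀−u)), y₀} ≤ y < f(x), where u := min{f(s) : |x−s| ≤ |x−x₀|}. -/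
open Metric Set

noncomputable section

/-- `ℝⁿ × ℝ` with the Euclidean (ℓ²) metric. -/
abbrev EucProd (n : ℕ) := WithLp 2 (EuclideanSpace ℝ (Fin n) × ℝ)

/-- The point of `ℝⁿ × ℝ` with first component `x` and last coordinate `y`. -/
def pt {n : ℕ} (x : EuclideanSpace ℝ (Fin n)) (y : ℝ) : EucProd n :=
  (WithLp.equiv 2 (EuclideanSpace ℝ (Fin n) × ℝ)).symm (x, y)

/-- The epigraph of `f : ℝⁿ → ℝ`, viewed as a subset of `ℝⁿ × ℝ`. -/
def epigraph {n : ℕ} (f : EuclideanSpace ℝ (Fin n) → ℝ) : Set (EucProd n) :=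
  {p | f ((WithLp.equiv 2 (EuclideanSpace ℝ (Fin n) × ℝ)) p).1 ≤
      ((WithLp.equiv 2 (EuclideanSpace ℝ (Fin n) × ℝ)) p).2}

theorem aux_dist {n : ℕ} (a b : EuclideanSpace ℝ (Fin n)) (s t : ℝ) :
    dist (pt a s) (pt b t) ^ 2 = dist a b ^ 2 + (s - t) ^ 2 := by
  rw [WithLp.prod_dist_eq_of_L2, Real.sq_sqrt (by positivity), Real.dist_eq]
  simp [pt]

theorem stmt0 {n : ℕ} (f : EuclideanSpace ℝ (Fin n) → ℝ) (hf : Continuous f)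
    (L : Set (EucProd n)) (hL : L = epigraph f)
    (K : Set (EucProd n)) (hKcl : IsClosed K) (hKne : K.Nonempty)
    (hdisj : K ∩ L = ∅)
    (x₀ : EuclideanSpace ℝ (Fin n)) (y₀ : ℝ) (hx₀ : pt x₀ y₀ ∈ K)
    (hbelow : ∀ x, y₀ < f x)
    (x : EuclideanSpace ℝ (Fin n)) (u : ℝ)
    (hu : IsLeast (f '' Metric.closedBall x (dist x x₀)) u) :
    (∃ y : ℝ, Metric.infDist (pt x y) K = Metric.infDist (pt x y) L) ∧
      ∀ y : ℝ, Metric.infDist (pt x y) K = Metric.infDist (pt x y) L →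
        min ((dist x x₀ ^ 2 + y₀ ^ 2 - u ^ 2) / (2 * (y₀ - u))) y₀ ≤ y ∧ y < f x := by
  have hfst : Continuous (fun p : EucProd n => ((WithLp.equiv 2 (EuclideanSpace ℝ (Fin n) × ℝ)) p).1) :=
    (WithLp.prod_continuous_ofLp 2 _ _).fst
  have hsnd : Continuous (fun p : EucProd n => ((WithLp.equiv 2 (EuclideanSpace ℝ (Fin n) × ℝ)) p).2) :=
    (WithLp.prod_continuous_ofLp 2 _ _).snd
  have hLcl : IsClosed L := by
    rw [hL]
    exact isClosed_le (hf.comp hfst) hsnd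
  have hmem : ∀ a b, f a ≤ b → pt a b ∈ L := by
    intro a b h
    rw [hL]
    exact h
  have hLne : L.Nonempty := ⟨pt x (f x), hmem _ _ le_rfl⟩
  obtain ⟨⟨su, hsu, hfsu⟩, hmin⟩ := hu
  have hyu : y₀ < u := hfsu ▸ hbelow su
  have key : ∀ y, y < min ((dist x x₀ ^ 2 + y₀ ^ 2 - u ^ 2) / (2 * (y₀ - u))) y₀ →
      infDist (pt x y) K < infDist (pt x y) L := by
    intro y hy
    obtain ⟨h1, h2⟩ := lt_min_iff.1 hy
    rw [lt_div_iff_of_neg (by linarith)] at h1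
    obtain ⟨q, hq, hqd⟩ := hLcl.exists_infDist_eq_dist hLne (pt x y)
    refine (infDist_le_dist_of_mem hx₀).trans_lt ?_
    rw [hqd]
    obtain ⟨s, t, rfl⟩ : ∃ s t, q = pt s t := ⟨_, _, rfl⟩
    have hst : f s ≤ t := by
      rw [hL] at hq
      exact hq
    refine lt_of_pow_lt_pow_left₀ 2 dist_nonneg ?_
    rw [aux_dist, aux_dist]
    have h3 := hbelow s
    rcases le_or_gt (dist x s) (dist x x₀) with h | h
    · have h4 : u ≤ f s := hmin ⟨s, by rwa [mem_closedBall, dist_comm], rfl⟩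
      nlinarith [sq_nonneg (dist x s), mul_self_le_mul_self (by linarith : 0 ≤ u - y) (by linarith : u - y ≤ t - y)]
    · have := pow_lt_pow_left₀ h dist_nonneg two_ne_zero
      nlinarith [mul_self_le_mul_self (by linarith : 0 ≤ y₀ - y) (by linarith : y₀ - y ≤ t - y)]
  have hpt : Continuous (fun y : ℝ => pt x y) :=
    (WithLp.prod_continuous_toLp 2 _ _).comp (by fun_prop : Continuous fun y : ℝ => (x, y))
  refine ⟨?_, fun y hy => ⟨?_, ?_⟩⟩
  · have hK := (continuous_infDist_pt K).comp hpt
    have hL' := (continuous_infDist_pt L).comp hpt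
    refine mem_range_of_exists_le_of_exists_ge (f := fun y => infDist (pt x y) K - infDist (pt x y) L)
      (c := 0) (hK.sub hL') ⟨_, (sub_neg.2 (key _ (sub_one_lt _))).le⟩ ⟨f x, ?_⟩ |>.imp
      fun y h => sub_eq_zero.1 h
    rw [infDist_zero_of_mem (hmem x (f x) le_rfl), sub_zero]
    exact infDist_nonneg
  · by_contra! h
    exact (key y h).ne hy
  · by_contra! h
    have h1 := hmem x y h
    rw [infDist_zero_of_mem h1] at hy
    have h2 := (hKcl.mem_iff_infDist_zero hKne).2 hy
    exact (hdisj ▸ (⟨h2, h1⟩ : pt x y ∈ K ∩ L) : pt x y ∈ (∅ : Set _))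

end
end

section
/- Let f : ℝⁿ → ℝ be continuous with epigraph L, and let K ⊆ ℝⁿ × ℝ be a nonempty compact set with K ∩ L = ∅. Then for every x ∈ ℝⁿ there exists y ∈ ℝ with d((x,y),K) = d((x,y),L) (i.e., every vertical line contains an equidistant point) if and only if there exists a point (x₀,y₀) ∈ K such that y₀ < f(x) for all x ∈ ℝⁿ. -/
open Metric Set

noncomputable section

lemma dist_pt {n : ℕ} (x z : EuclideanSpace ℝ (Fin n)) (y w : ℝ) :
    dist (pt x y) (pt z w) = √(dist x z ^ 2 + (y - w) ^ 2) := by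
  rw [WithLp.prod_dist_eq_of_L2]
  simp only [pt, WithLp.equiv_symm_apply, Real.dist_eq, sq_abs]
  rfl

lemma exists_pt {n : ℕ} (p : EucProd n) : ∃ x y, p = pt x y := ⟨p.fst, p.snd, rfl⟩

lemma mem_epi {n : ℕ} (f : EuclideanSpace ℝ (Fin n) → ℝ) (x : EuclideanSpace ℝ (Fin n)) (y : ℝ) :
    pt x y ∈ epigraph f ↔ f x ≤ y := Iff.rfl

lemma continuous_pt {n : ℕ} (x : EuclideanSpace ℝ (Fin n)) : Continuous (fun y : ℝ => pt x y) := by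
  refine LipschitzWith.continuous (K := 1) (LipschitzWith.of_dist_le_mul fun y w => ?_)
  rw [dist_pt, dist_self, Real.dist_eq]
  simp [Real.sqrt_sq_eq_abs]

theorem stmt1 {n : ℕ} (f : EuclideanSpace ℝ (Fin n) → ℝ) (hf : Continuous f)
    (L : Set (EucProd n)) (hL : L = epigraph f)
    (K : Set (EucProd n)) (hKcp : IsCompact K) (hKne : K.Nonempty)
    (hdisj : K ∩ L = ∅) :
    (∀ x : EuclideanSpace ℝ (Fin n),
        ∃ y : ℝ, Metric.infDist (pt x y) K = Metric.infDist (pt x y) L) ↔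
      ∃ (x₀ : EuclideanSpace ℝ (Fin n)) (y₀ : ℝ),
        pt x₀ y₀ ∈ K ∧ ∀ x, y₀ < f x := by
  subst hL
  have hLne : (epigraph f).Nonempty := ⟨pt 0 (f 0), le_refl (f 0)⟩
  constructor
  · intro H
    have hc : Continuous (fun p : EucProd n => p.snd) := by fun_prop
    obtain ⟨p, hpK, hp⟩ := hKcp.exists_isMinOn hKne hc.continuousOn
    obtain ⟨x₀, y₀, rfl⟩ := exists_pt p
    refine ⟨x₀, y₀, hpK, ?_⟩
    by_contra! hcon
    obtain ⟨x, hx⟩ := hcon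
    obtain ⟨y, hy⟩ := H x
    obtain ⟨q, hqK, hq⟩ := hKcp.exists_infDist_eq_dist hKne (pt x y)
    have hmin := hp hqK
    obtain ⟨k, l, rfl⟩ := exists_pt q
    replace hmin : y₀ ≤ l := hmin
    have hnot : ¬ f k ≤ l := fun h => by
      have : pt k l ∈ K ∩ epigraph f := ⟨hqK, h⟩
      rw [hdisj] at this
      exact this
    rcases le_or_gt (f x) y with h | h
    · have h0 : infDist (pt x y) (epigraph f) = 0 := infDist_zero_of_mem h
      rw [← hy, hq, dist_eq_zero] at h0
      rw [← h0] at hqK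
      have : pt x y ∈ K ∩ epigraph f := ⟨hqK, h⟩
      rw [hdisj] at this
      exact this
    · have h1 : infDist (pt x y) (epigraph f) ≤ dist (pt x y) (pt x (f x)) :=
        infDist_le_dist_of_mem (le_refl (f x))
      rw [← hy, hq, dist_pt, dist_pt, dist_self] at h1
      have h2 := (Real.sqrt_le_sqrt_iff (by positivity)).1 h1
      have h3 : dist x k ^ 2 = 0 := by nlinarith [sq_nonneg (dist x k)]
      have h4 : x = k := by simpa using h3
      subst h4
      exact hnot (by linarith)
  · rintro ⟨x₀, y₀, hK, hlt⟩ x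
    obtain ⟨z₀, -, hz₀⟩ := (isCompact_closedBall x (dist x x₀)).exists_isMinOn
      ⟨x, mem_closedBall_self dist_nonneg⟩ hf.continuousOn
    set R := dist x x₀ with hR
    set δ := f z₀ - y₀ with hδ
    have hδ0 : 0 < δ := sub_pos.2 (hlt z₀)
    have hcont : ∀ S : Set (EucProd n), Continuous (fun y : ℝ => infDist (pt x y) S) :=
      fun S => (continuous_infDist_pt S).comp (continuous_pt x)
    set t := R ^ 2 / (2 * δ) with ht
    have ht0 : 0 ≤ t := by positivity
    have htR : 2 * δ * t = R ^ 2 := by rw [ht]; field_simp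
    have hlow : infDist (pt x (y₀ - t)) K ≤ infDist (pt x (y₀ - t)) (epigraph f) := by
      refine (infDist_le_dist_of_mem hK).trans ((le_infDist hLne).2 ?_)
      intro q hq
      obtain ⟨z, w, rfl⟩ := exists_pt q
      rw [mem_epi] at hq
      rw [dist_pt, dist_pt, ← hR]
      apply Real.sqrt_le_sqrt
      rcases le_total (dist x z) R with h | h
      · have h5 : f z₀ ≤ f z := hz₀ (by rwa [mem_closedBall'])
        have h6 : t + δ ≤ w - (y₀ - t) := by linarith
        nlinarith [sq_nonneg (dist x z)]
      · have h5 := hlt z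
        have h6 : t ≤ w - (y₀ - t) := by linarith
        have h7 : 0 ≤ R := dist_nonneg
        nlinarith
    have hhigh : infDist (pt x (f x)) (epigraph f) ≤ infDist (pt x (f x)) K := by
      rw [infDist_zero_of_mem (show pt x (f x) ∈ epigraph f from le_refl (f x))]
      exact infDist_nonneg
    obtain ⟨y, hy⟩ := mem_range_of_exists_le_of_exists_ge
      ((hcont K).sub (hcont (epigraph f))) (c := 0)
      ⟨_, sub_nonpos.2 hlow⟩ ⟨_, sub_nonneg.2 hhigh⟩
    exact ⟨y, sub_eq_zero.1 hy⟩

end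
end

section
/- Let f : ℝⁿ → ℝ be a continuous positive-valued function with epigraph L, and let K ⊆ ℝⁿ × ℝ be a closed set with K ∩ L = ∅. If there exist no point x₀ ∈ ℝⁿ and real numbers 0 < y₁ < y₂ such that (x₀,y₁) ∉ K and (x₀,y₂) ∈ K, then for every x ∈ ℝⁿ there is at most one y ∈ ℝ with d((x,y),K) = d((x,y),L) (each vertical line contains at most one equidistant point). -/
open Metric Set

noncomputable section

lemma dist_pt_sq {n : ℕ} (x a : EuclideanSpace ℝ (Fin n)) (y b : ℝ) :
    dist (pt x y) (pt a b) ^ 2 = dist x a ^ 2 + (y - b) ^ 2 := by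
  rw [WithLp.prod_dist_eq_of_L2, Real.sq_sqrt (by positivity)]
  simp [pt, Real.dist_eq, sq_abs]

lemma pt_eta {n : ℕ} (p : EucProd n) : pt p.fst p.snd = p := rfl

lemma infDist_sq_le {n : ℕ} {S : Set (EucProd n)} {x a : EuclideanSpace ℝ (Fin n)} {y b : ℝ}
    (h : pt a b ∈ S) : infDist (pt x y) S ^ 2 ≤ dist x a ^ 2 + (y - b) ^ 2 := by
  rw [← dist_pt_sq]
  have := infDist_le_dist_of_mem (x := pt x y) h
  have := infDist_nonneg (x := pt x y) (s := S)
  gcongr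

lemma infDist_sq_eq {n : ℕ} {S : Set (EucProd n)} (hS : IsClosed S) (hne : S.Nonempty)
    (x : EuclideanSpace ℝ (Fin n)) (y : ℝ) :
    ∃ a b, pt a b ∈ S ∧ infDist (pt x y) S ^ 2 = dist x a ^ 2 + (y - b) ^ 2 := by
  haveI : ProperSpace (EucProd n) := FiniteDimensional.proper ℝ _
  obtain ⟨p, hp, h⟩ := hS.exists_infDist_eq_dist hne (pt x y)
  refine ⟨p.fst, p.snd, hp, ?_⟩
  rw [← dist_pt_sq, h, pt_eta]

lemma key {n : ℕ} (f : EuclideanSpace ℝ (Fin n) → ℝ) (hf : Continuous f)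
    (hfpos : ∀ x, 0 < f x)
    (K : Set (EucProd n)) (hKcl : IsClosed K) (hKne : K.Nonempty)
    (hdisj : K ∩ epigraph f = ∅)
    (hno : ∀ (x₀ : EuclideanSpace ℝ (Fin n)) (y₁ y₂ : ℝ),
      0 < y₁ → y₁ ≤ y₂ → pt x₀ y₂ ∈ K → pt x₀ y₁ ∈ K)
    (x : EuclideanSpace ℝ (Fin n)) (y y' : ℝ)
    (h : infDist (pt x y) K = infDist (pt x y) (epigraph f))
    (h' : infDist (pt x y') K = infDist (pt x y') (epigraph f)) : ¬ y < y' := by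
  intro hlt
  have memL : ∀ a b, pt a b ∈ epigraph f ↔ f a ≤ b := fun a b => Iff.rfl
  have hLcl : IsClosed (epigraph f) := by
    have h1 : Continuous fun p : EucProd n => p.fst := by fun_prop
    have h2 : Continuous fun p : EucProd n => p.snd := by fun_prop
    exact isClosed_le (hf.comp h1) h2
  have hLne : (epigraph f).Nonempty := ⟨pt 0 (f 0), (memL _ _).2 le_rfl⟩
  obtain ⟨a, b, hab, hr⟩ := infDist_sq_eq hLcl hLne x y
  obtain ⟨c, e, hce, hs⟩ := infDist_sq_eq hKcl hKne x y'
  have K1 : ∀ c e, pt c e ∈ K → infDist (pt x y) (epigraph f) ^ 2 ≤ dist x c ^ 2 + (y - e) ^ 2 :=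
    fun c e hh => h ▸ infDist_sq_le hh
  have K2 : ∀ c e, pt c e ∈ K → infDist (pt x y') (epigraph f) ^ 2 ≤ dist x c ^ 2 + (y' - e) ^ 2 :=
    fun c e hh => h' ▸ infDist_sq_le hh
  have L1 : ∀ a b, f a ≤ b → infDist (pt x y) (epigraph f) ^ 2 ≤ dist x a ^ 2 + (y - b) ^ 2 :=
    fun a b hh => infDist_sq_le ((memL a b).2 hh)
  have L2 : ∀ a b, f a ≤ b → infDist (pt x y') (epigraph f) ^ 2 ≤ dist x a ^ 2 + (y' - b) ^ 2 :=
    fun a b hh => infDist_sq_le ((memL a b).2 hh)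
  rw [h'] at hs
  rw [memL] at hab
  generalize infDist (pt x y) (epigraph f) ^ 2 = R at *
  generalize infDist (pt x y') (epigraph f) ^ 2 = S at *
  have hb0 : 0 < b := (hfpos a).trans_le hab
  have hby : y ≤ b := by
    by_contra! hb
    have := L1 a y (by linarith)
    nlinarith [mul_pos (sub_pos.2 hb) (sub_pos.2 hb)]
  have heb : b ≤ e := by
    by_contra! he
    have := K1 c e hce
    have := L2 a b hab
    nlinarith [mul_pos (sub_pos.2 he) (sub_pos.2 hlt)]
  have he0 : 0 < e := by linarith
  have hey : e ≤ max y' 0 := by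
    by_contra! he
    obtain ⟨h1, h2⟩ := max_lt_iff.1 he
    have hm1 := le_max_left y' 0
    have hm2 := le_max_right y' 0
    set m := max y' 0
    have := K2 c ((e + m) / 2) (hno c _ e (by linarith) (by linarith) hce)
    nlinarith
  have hy' : 0 < y' := by
    by_contra! hy
    rw [max_eq_right hy] at hey
    linarith
  rw [max_eq_left hy'.le] at hey
  have hcb : S ≤ dist x a ^ 2 + (y' - e) ^ 2 := L2 a e (hab.trans heb)
  have hbley : b ≤ y := by
    by_contra! hb
    have hm1 := le_max_left y (b / 2)
    have hm2 := le_max_right y (b / 2)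
    have hm3 : max y (b / 2) < b := max_lt hb (by linarith)
    set m := max y (b / 2)
    have := K1 c m (hno c m e (by linarith) (by linarith) hce)
    nlinarith
  have hbe : b = y := le_antisymm hbley hby
  subst hbe
  have q1 := K1 c b (hno c b e hb0 heb hce)
  have q2 := L2 a y' (by linarith)
  have q3 : dist x c ^ 2 = dist x a ^ 2 := by nlinarith [sq_nonneg (y' - e)]
  have hd : dist x a ≠ 0 := by
    intro h0
    rw [h0] at q3
    have hxc : dist x c = 0 := by simpa using q3
    have e1 := dist_eq_zero.1 h0
    have e2 := dist_eq_zero.1 hxc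
    subst e1
    subst e2
    have : pt x b ∈ K ∩ epigraph f := ⟨hno x b e hb0 heb hce, hab⟩
    rw [hdisj] at this
    exact this
  have hball : ball x (dist x a) ⊆ {z | y' ≤ f z} := by
    intro z hz
    rw [mem_ball'] at hz
    by_contra! hfz
    simp only [mem_setOf_eq, not_le] at hfz
    have := L2 z y' hfz.le
    have h5 : dist x z ^ 2 < dist x a ^ 2 := by gcongr
    nlinarith [sq_nonneg (y' - e)]
  have hcl : closure (ball x (dist x a)) ⊆ {z | y' ≤ f z} :=
    closure_minimal hball (isClosed_le continuous_const hf)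
  rw [closure_ball x hd] at hcl
  have : y' ≤ f a := hcl (by simp [dist_comm])
  linarith

theorem stmt8 {n : ℕ} (f : EuclideanSpace ℝ (Fin n) → ℝ) (hf : Continuous f)
    (hfpos : ∀ x, 0 < f x)
    (L : Set (EucProd n)) (hL : L = epigraph f)
    (K : Set (EucProd n)) (hKcl : IsClosed K) (hKne : K.Nonempty)
    (hdisj : K ∩ L = ∅)
    (hno : ¬ ∃ (x₀ : EuclideanSpace ℝ (Fin n)) (y₁ y₂ : ℝ),
      0 < y₁ ∧ y₁ < y₂ ∧ pt x₀ y₁ ∉ K ∧ pt x₀ y₂ ∈ K) :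
    ∀ x : EuclideanSpace ℝ (Fin n), ∀ y y' : ℝ,
      Metric.infDist (pt x y) K = Metric.infDist (pt x y) L →
      Metric.infDist (pt x y') K = Metric.infDist (pt x y') L →
      y = y' := by
  subst hL
  have hno' : ∀ (x₀ : EuclideanSpace ℝ (Fin n)) (y₁ y₂ : ℝ),
      0 < y₁ → y₁ ≤ y₂ → pt x₀ y₂ ∈ K → pt x₀ y₁ ∈ K := by
    intro x₀ y₁ y₂ h0 h1 h2
    by_contra h3
    rcases h1.lt_or_eq with h4 | h4
    · exact hno ⟨x₀, y₁, y₂, h0, h4, h3, h2⟩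
    · exact h3 (h4 ▸ h2)
  intro x y y' h h'
  exact le_antisymm (not_lt.1 (key f hf hfpos K hKcl hKne hdisj hno' x y' y h' h))
    (not_lt.1 (key f hf hfpos K hKcl hKne hdisj hno' x y y' h h'))

end
end

section
/- Let f : ℝ → ℝ be positive-valued, convex and continuously differentiable, let R > 0, K ⊆ ℝ² the closed disk of radius R centered at the origin, and assume t² + f(t)² > R² for all t ∈ ℝ; let L be the epigraph of f. If (x,y) ∈ ℝ² is an equidistant point of K and L and t ∈ ℝ is a parameter at which the distance from (x,y) to L is attained at the graph point (t,f(t)), then α(t) := (t f'(t) − f(t))/√(1 + f'(t)²) < R and x = t + (f'(t)/(2√(1+f'(t)²)))·(t² + f(t)² − R²)/(R − α(t)), y = f(t) − (1/(2√(1+f'(t)²)))·(t² + f(t)² − R²)/(R − α(t)). -/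
open Metric Set

noncomputable section

/-- `ℝ²` with the Euclidean (ℓ²) metric. -/
abbrev EucPlane := WithLp 2 (ℝ × ℝ)

/-- The point of the Euclidean plane with coordinates `(a, b)`. -/
def pt2 (a b : ℝ) : EucPlane := (WithLp.equiv 2 (ℝ × ℝ)).symm (a, b)

/-- The epigraph of `f : ℝ → ℝ`, viewed as a subset of the Euclidean plane. -/
def epigraph2 (f : ℝ → ℝ) : Set EucPlane :=
  {p | f ((WithLp.equiv 2 (ℝ × ℝ)) p).1 ≤ ((WithLp.equiv 2 (ℝ × ℝ)) p).2}

theorem pt2_dist_sq (a b c d : ℝ) : dist (pt2 a b) (pt2 c d) ^ 2 = (a - c) ^ 2 + (b - d) ^ 2 := by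
  rw [WithLp.prod_dist_eq_of_L2, Real.sq_sqrt (by positivity)]
  simp [pt2, Real.dist_eq, sq_abs]

theorem pt2_norm_sq (a b : ℝ) : ‖pt2 a b‖ ^ 2 = a ^ 2 + b ^ 2 := by
  rw [WithLp.prod_norm_sq_eq_of_L2]
  simp [pt2, sq_abs]

theorem infDist_ball_aux (p : EucPlane) (R : ℝ) (hR : 0 < R) (hp : R < ‖p‖) :
    Metric.infDist p (Metric.closedBall (0 : EucPlane) R) = ‖p‖ - R := by
  have hp0 : 0 < ‖p‖ := hR.trans hp
  apply le_antisymm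
  · have hm : (R / ‖p‖) • p ∈ Metric.closedBall (0 : EucPlane) R := by
      rw [mem_closedBall_zero_iff, norm_smul, Real.norm_eq_abs, abs_of_pos (by positivity)]
      field_simp
      exact le_rfl
    refine (Metric.infDist_le_dist_of_mem hm).trans (le_of_eq ?_)
    have h1 : p - (R / ‖p‖) • p = (1 - R / ‖p‖) • p := by rw [sub_smul, one_smul]
    have h2 : 0 ≤ 1 - R / ‖p‖ := by
      rw [sub_nonneg, div_le_one hp0]; exact hp.le
    rw [dist_eq_norm, h1, norm_smul, Real.norm_eq_abs, abs_of_nonneg h2]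
    field_simp
  · rw [Metric.le_infDist ⟨0, by simp [hR.le]⟩]
    intro q hq
    rw [mem_closedBall_zero_iff] at hq
    have := norm_sub_norm_le p q
    rw [dist_eq_norm]
    linarith

theorem stmt12 (f : ℝ → ℝ) (hfpos : ∀ t, 0 < f t)
    (hfconv : ConvexOn ℝ Set.univ f) (hfC1 : ContDiff ℝ 1 f)
    (R : ℝ) (hR : 0 < R)
    (K : Set EucPlane) (hK : K = Metric.closedBall (0 : EucPlane) R)
    (L : Set EucPlane) (hL : L = epigraph2 f)
    (hsep : ∀ t : ℝ, R ^ 2 < t ^ 2 + f t ^ 2)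
    (α : ℝ → ℝ)
    (hα : ∀ s : ℝ, α s = (s * deriv f s - f s) / Real.sqrt (1 + deriv f s ^ 2))
    (x y t : ℝ)
    (hequi : Metric.infDist (pt2 x y) K = Metric.infDist (pt2 x y) L)
    (hatt : Metric.infDist (pt2 x y) L = dist (pt2 x y) (pt2 t (f t))) :
    α t < R ∧
      x = t + deriv f t / (2 * Real.sqrt (1 + deriv f t ^ 2)) *
            ((t ^ 2 + f t ^ 2 - R ^ 2) / (R - α t)) ∧
      y = f t - 1 / (2 * Real.sqrt (1 + deriv f t ^ 2)) *
            ((t ^ 2 + f t ^ 2 - R ^ 2) / (R - α t)) := by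
  subst hK hL
  have hmem : ∀ s z, f s ≤ z → pt2 s z ∈ epigraph2 f := by
    intro s z h
    simpa [epigraph2, pt2] using h
  have hle : ∀ s z, f s ≤ z → (x - t) ^ 2 + (y - f t) ^ 2 ≤ (x - s) ^ 2 + (y - z) ^ 2 := by
    intro s z h
    have := Metric.infDist_le_dist_of_mem (x := pt2 x y) (hmem s z h)
    rw [hatt] at this
    rw [← pt2_dist_sq, ← pt2_dist_sq]
    exact pow_le_pow_left₀ dist_nonneg this 2
  have hnorm := pt2_norm_sq x y
  have hdsq := pt2_dist_sq x y t (f t)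
  have hd0 : 0 ≤ dist (pt2 x y) (pt2 t (f t)) := dist_nonneg
  rw [hatt] at hequi
  set d := dist (pt2 x y) (pt2 t (f t)) with hd
  have hRp : R < ‖pt2 x y‖ := by
    by_contra! hcon
    have h0 : Metric.infDist (pt2 x y) (Metric.closedBall (0 : EucPlane) R) = 0 :=
      Metric.infDist_zero_of_mem (mem_closedBall_zero_iff.2 hcon)
    have hdz : d = 0 := by rw [← hequi, h0]
    rw [hdz] at hdsq
    have e1 : x = t := by nlinarith [sq_nonneg (x - t), sq_nonneg (y - f t)]
    have e2 : y = f t := by nlinarith [sq_nonneg (x - t), sq_nonneg (y - f t)]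
    have := hsep t
    rw [e1, e2] at hnorm hcon
    have := pow_le_pow_left₀ (norm_nonneg _) hcon 2
    linarith
  rw [infDist_ball_aux _ R hR hRp] at hequi
  have hdpos : 0 < d := by linarith
  have hdiff : HasDerivAt f (deriv f t) t :=
    ((hfC1.differentiable (by norm_num)) t).hasDerivAt
  have hg : HasDerivAt (fun s => (x - s) ^ 2 + (y - f s) ^ 2)
      (2 * (x - t) * (-1) + 2 * (y - f t) * (- deriv f t)) t := by
    have h1 := ((hasDerivAt_id t).const_sub x).pow 2
    have h2 := (hdiff.const_sub y).pow 2
    refine HasDerivAt.congr_deriv (h1.add h2) ?_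
    simp
  have hmin : IsLocalMin (fun s => (x - s) ^ 2 + (y - f s) ^ 2) t :=
    Filter.Eventually.of_forall fun s => hle s (f s) le_rfl
  have hfo := hmin.hasDerivAt_eq_zero hg
  have hα' := hα t
  generalize deriv f t = m at *
  have hx : x - t = m * (f t - y) := by linarith
  have hu : 0 < f t - y := by
    by_contra! hcon
    have h := hle t y (by linarith)
    have e2 : f t - y = 0 := by nlinarith [sq_nonneg (f t - y)]
    rw [e2] at hx
    have e3 : y - f t = 0 := by linarith
    rw [hx, e3] at hdsq
    nlinarith
  have hw2 : Real.sqrt (1 + m ^ 2) ^ 2 = 1 + m ^ 2 := Real.sq_sqrt (by positivity)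
  have hw : 0 < Real.sqrt (1 + m ^ 2) := Real.sqrt_pos.2 (by positivity)
  generalize Real.sqrt (1 + m ^ 2) = w at *
  obtain ⟨u, hu'⟩ : ∃ u, u = f t - y := ⟨_, rfl⟩
  rw [← hu'] at hx hu
  have hy : y = f t - u := by linarith
  have hx' : x = t + m * u := by linarith
  have hdu : d = u * w := by
    have : d ^ 2 = (u * w) ^ 2 := by
      rw [hdsq, mul_pow, hw2, hx, hy]; ring
    exact (pow_left_inj₀ hd0 (by positivity) two_ne_zero).1 this
  have hn : ‖pt2 x y‖ = R + u * w := by linarith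
  rw [hn] at hnorm
  have haw : α t * w = t * m - f t := by rw [hα']; field_simp
  have key : t ^ 2 + f t ^ 2 - R ^ 2 = 2 * u * w * (R - α t) := by
    have h1 : (R + u * w) ^ 2 = (t + m * u) ^ 2 + (f t - u) ^ 2 := by
      rw [hnorm, hx', hy]
    linear_combination -h1 + u ^ 2 * hw2 + 2 * u * haw
  have hpos : 0 < 2 * u * w * (R - α t) := by rw [← key]; linarith [hsep t]
  have hRa : 0 < R - α t := pos_of_mul_pos_right hpos (by positivity)
  refine ⟨by linarith, ?_, ?_⟩
  · rw [key, hx']; field_simp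
  · rw [key, hy]; field_simp

end
end

section
/- Let f : ℝ → ℝ be positive-valued, convex and continuously differentiable, let R > 0, and define α(t) := (t f'(t) − f(t))/√(1 + f'(t)²). If t₀ > 0 satisfies α(t₀) ≥ R, then α(t) ≥ α(t₀) for every t > t₀. -/
open Metric Set

noncomputable section

theorem stmt13 (f : ℝ → ℝ) (hfpos : ∀ t, 0 < f t)
    (hfconv : ConvexOn ℝ Set.univ f) (hfC1 : ContDiff ℝ 1 f)
    (R : ℝ) (hR : 0 < R)
    (α : ℝ → ℝ)
    (hα : ∀ s : ℝ, α s = (s * deriv f s - f s) / Real.sqrt (1 + deriv f s ^ 2))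
    (t₀ : ℝ) (ht₀ : 0 < t₀) (hcrit : R ≤ α t₀) :
    ∀ t : ℝ, t₀ < t → α t₀ ≤ α t := by
  intro t ht
  have hd : Differentiable ℝ f := hfC1.differentiable (by norm_num)
  have h1 := hfconv.deriv_le_slope (mem_univ t₀) (mem_univ t) ht (hd t₀)
  have h2 := hfconv.slope_le_deriv (mem_univ t₀) (mem_univ t) ht (hd t)
  have hpq : deriv f t₀ ≤ deriv f t := h1.trans h2
  rw [slope_def_field, div_le_iff₀ (by linarith)] at h2
  have hpos : 0 < α t₀ := lt_of_lt_of_le hR hcrit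
  rw [hα] at hpos
  rw [hα, hα]
  have ha := hfpos t₀
  generalize deriv f t₀ = p at *
  generalize deriv f t = q at *
  generalize f t₀ = a at *
  generalize f t = b at *
  have sp : 0 < Real.sqrt (1 + p ^ 2) := Real.sqrt_pos.2 (by positivity)
  have sq : 0 < Real.sqrt (1 + q ^ 2) := Real.sqrt_pos.2 (by positivity)
  have hA : 0 < t₀ * p - a := by
    by_contra h
    exact absurd hpos (not_lt.2 (div_nonpos_of_nonpos_of_nonneg (not_lt.1 h) sp.le))
  have hp : 0 < p := by
    by_contra h
    nlinarith [mul_nonneg ht₀.le (sub_nonneg.2 (not_lt.1 h))]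
  have hq : 0 < q := by linarith
  have hB : t₀ * p - a ≤ t₀ * q - a := by nlinarith
  have hB0 : 0 < t₀ * q - a := by linarith
  have hC : t₀ * q - a ≤ t * q - b := by nlinarith
  refine le_trans ?_ (div_le_div_of_nonneg_right hC sq.le)
  rw [div_le_div_iff₀ sp sq]
  refine (pow_le_pow_iff_left₀ (by positivity) (by positivity) two_ne_zero).1 ?_
  rw [mul_pow, mul_pow, Real.sq_sqrt (by positivity), Real.sq_sqrt (by positivity)]
  have key : 0 ≤ (q - p) * ((t₀ + a * p) * (t₀ * q - a) + (t₀ + a * q) * (t₀ * p - a)) :=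
    mul_nonneg (by linarith) (by positivity)
  nlinarith [key]

end
end

section
/- Let f : ℝ → ℝ be positive-valued, convex and continuously differentiable, let R > 0, and define α(t) := (t f'(t) − f(t))/√(1 + f'(t)²) and C⁺ := {t > 0 : α(t) ≥ R}. Then either C⁺ is empty, or t₀⁺ := inf C⁺ satisfies t₀⁺ > 0 and (t₀⁺, ∞) ⊆ C⁺, i.e. every t > t₀⁺ satisfies α(t) ≥ R. -/
open Metric Set

noncomputable section

theorem stmt14 (f : ℝ → ℝ) (hfpos : ∀ t, 0 < f t)
    (hfconv : ConvexOn ℝ Set.univ f) (hfC1 : ContDiff ℝ 1 f)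
    (R : ℝ) (hR : 0 < R)
    (α : ℝ → ℝ)
    (hα : ∀ s : ℝ, α s = (s * deriv f s - f s) / Real.sqrt (1 + deriv f s ^ 2))
    (C : Set ℝ) (hC : C = {t : ℝ | 0 < t ∧ R ≤ α t}) :
    C = ∅ ∨ (0 < sInf C ∧ ∀ t : ℝ, sInf C < t → R ≤ α t) := by
  have hd : Differentiable ℝ f := hfC1.differentiable (by norm_num)
  have hRs : ∀ s ∈ C, R ≤ s ∧ 0 < deriv f s ∧
      R * Real.sqrt (1 + deriv f s ^ 2) ≤ s * deriv f s - f s := by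
    intro s hs
    rw [hC] at hs
    obtain ⟨hs0, hs1⟩ := hs
    have hq : 0 < Real.sqrt (1 + deriv f s ^ 2) := by positivity
    rw [hα, le_div_iff₀ hq] at hs1
    have hc := hfpos s
    have hp : 0 < deriv f s := by
      by_contra h
      push Not at h
      nlinarith [mul_pos hR hq, mul_nonneg hs0.le (neg_nonneg.2 h)]
    refine ⟨?_, hp, hs1⟩
    have h1 : deriv f s ≤ Real.sqrt (1 + deriv f s ^ 2) :=
      Real.le_sqrt_of_sq_le (by linarith)
    have h2 := mul_le_mul_of_nonneg_left h1 hR.le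
    exact le_of_mul_le_mul_right (by linarith) hp
  rcases C.eq_empty_or_nonempty with h | hne
  · exact Or.inl h
  right
  refine ⟨hR.trans_le (le_csInf hne fun s hs => (hRs s hs).1), ?_⟩
  intro t ht
  obtain ⟨s, hs, hst⟩ := exists_lt_of_csInf_lt hne ht
  obtain ⟨h1, hp, h2⟩ := hRs s hs
  have hA := hfconv.deriv_le_slope (mem_univ s) (mem_univ t) hst (hd s)
  have hB := hfconv.slope_le_deriv (mem_univ s) (mem_univ t) hst (hd t)
  have hpq := hA.trans hB
  rw [slope_def_field, div_le_iff₀ (sub_pos.2 hst)] at hB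
  have hq : 0 < Real.sqrt (1 + deriv f t ^ 2) := by positivity
  rw [hα, le_div_iff₀ hq]
  generalize deriv f s = p at *
  generalize deriv f t = q at *
  have h3 : p ≤ Real.sqrt (1 + p ^ 2) := Real.le_sqrt_of_sq_le (by linarith)
  have h4 : Real.sqrt (1 + p ^ 2) ^ 2 = 1 + p ^ 2 := Real.sq_sqrt (by positivity)
  have h5 : Real.sqrt (1 + q ^ 2) ≤ Real.sqrt (1 + p ^ 2) + (q - p) := by
    apply Real.sqrt_le_iff.2
    constructor
    · linarith
    · nlinarith [mul_nonneg (sub_nonneg.2 hpq) (sub_nonneg.2 h3)]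
  have h6 := mul_le_mul_of_nonneg_left h5 hR.le
  have h7 := mul_le_mul_of_nonneg_right h1 (sub_nonneg.2 hpq)
  nlinarith

end
end

section
/- Let f : ℝ → ℝ be positive-valued, convex and twice continuously differentiable, R > 0, t² + f(t)² > R² for all t, and let x(t), y(t) be the equidistant parameterization on the admissible domain D = {t : α(t) < R}. Setting r(t) := √(x(t)² + y(t)²) and g(t) := (x(t) − t)/(r(t) − R), the compatibility identity (g(t) − x(t)/r(t))·x'(t) = (√(1 − g(t)²) + y(t)/r(t))·y'(t) holds for all t ∈ D; moreover the coefficient √(1 − g(t)²) + y(t)/r(t) is strictly positive for all t ∈ D. -/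
open Metric Set

noncomputable section

theorem stmt15 (f : ℝ → ℝ) (hfpos : ∀ t, 0 < f t)
    (hfconv : ConvexOn ℝ Set.univ f) (hfC2 : ContDiff ℝ 2 f)
    (R : ℝ) (hR : 0 < R)
    (hsep : ∀ t : ℝ, R ^ 2 < t ^ 2 + f t ^ 2)
    (α : ℝ → ℝ)
    (hα : ∀ s : ℝ, α s = (s * deriv f s - f s) / Real.sqrt (1 + deriv f s ^ 2))
    (D : Set ℝ) (hD : D = {t : ℝ | α t < R})
    (x y : ℝ → ℝ)
    (hx : ∀ t : ℝ, x t = t + deriv f t / (2 * Real.sqrt (1 + deriv f t ^ 2)) *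
        ((t ^ 2 + f t ^ 2 - R ^ 2) / (R - α t)))
    (hy : ∀ t : ℝ, y t = f t - 1 / (2 * Real.sqrt (1 + deriv f t ^ 2)) *
        ((t ^ 2 + f t ^ 2 - R ^ 2) / (R - α t)))
    (r g : ℝ → ℝ)
    (hr : ∀ t : ℝ, r t = Real.sqrt (x t ^ 2 + y t ^ 2))
    (hg : ∀ t : ℝ, g t = (x t - t) / (r t - R)) :
    ∀ t ∈ D,
      (g t - x t / r t) * deriv x t =
          (Real.sqrt (1 - g t ^ 2) + y t / r t) * deriv y t ∧
        0 < Real.sqrt (1 - g t ^ 2) + y t / r t := by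
  intro t ht
  rw [hD] at ht
  have ht' : α t < R := ht
  have hf1 : Differentiable ℝ f := hfC2.differentiable (by norm_num)
  have hp1 : Differentiable ℝ (deriv f) :=
    ((contDiff_succ_iff_deriv (n := 1)).1 hfC2).2.2.differentiable (by norm_num)
  have hwpos : ∀ s, 0 < Real.sqrt (1 + deriv f s ^ 2) := fun s => Real.sqrt_pos.2 (by positivity)
  have hwsq : ∀ s, Real.sqrt (1 + deriv f s ^ 2) ^ 2 = 1 + deriv f s ^ 2 :=
    fun s => Real.sq_sqrt (by positivity)
  have hwd : Differentiable ℝ (fun s => Real.sqrt (1 + deriv f s ^ 2)) := by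
    apply Differentiable.sqrt
    · fun_prop
    · intro s; positivity
  have hαd : Differentiable ℝ α := by
    rw [funext hα]
    apply Differentiable.fun_div
    · fun_prop
    · exact hwd
    · intro s; exact (hwpos s).ne'
  obtain ⟨b, hb⟩ : ∃ b : ℝ → ℝ, ∀ s, b s = 1 / Real.sqrt (1 + deriv f s ^ 2) := ⟨_, fun _ => rfl⟩
  obtain ⟨d, hd⟩ : ∃ d : ℝ → ℝ, ∀ s, d s = (s ^ 2 + f s ^ 2 - R ^ 2) / (2 * (R - α s)) :=
    ⟨_, fun _ => rfl⟩
  have hbpos : ∀ s, 0 < b s := fun s => by rw [hb]; exact one_div_pos.2 (hwpos s)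
  have hbsq : ∀ s, (deriv f s * b s) ^ 2 + b s ^ 2 = 1 := fun s => by
    have h1 := hwsq s
    have h2 := hwpos s
    rw [hb]
    field_simp
    linarith
  have hbd : Differentiable ℝ b := by
    rw [funext hb]
    exact Differentiable.fun_div (by fun_prop) hwd (fun s => (hwpos s).ne')
  have hdd : DifferentiableAt ℝ d t := by
    rw [funext hd]
    apply DifferentiableAt.fun_div
    · fun_prop
    · fun_prop
    · have : 0 < R - α t := by linarith
      positivity
  have hαb : ∀ s, α s = (s * deriv f s - f s) * b s := fun s => by rw [hα, hb]; ring
  have hx' : ∀ s, x s = s + deriv f s * b s * d s := fun s => by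
    rw [hx, hb, hd]; simp only [div_eq_mul_inv, mul_inv]; ring
  have hy' : ∀ s, y s = f s - b s * d s := fun s => by
    rw [hy, hb, hd]; simp only [div_eq_mul_inv, mul_inv]; ring
  have hsq : ∀ s, α s < R → x s ^ 2 + y s ^ 2 = (R + d s) ^ 2 := fun s hs => by
    have h1 : d s * (2 * (R - α s)) = s ^ 2 + f s ^ 2 - R ^ 2 := by
      rw [hd]; exact div_mul_cancel₀ _ (by linarith)
    rw [hx', hy']
    rw [hαb] at h1
    linear_combination (d s ^ 2) * hbsq s - h1
  have hdpos : 0 < d t := by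
    rw [hd]; exact div_pos (by linarith [hsep t]) (by linarith)
  have hrt : r t = R + d t := by
    rw [hr, hsq t ht', Real.sqrt_sq (by linarith)]
  have hgt : g t = deriv f t * b t := by
    rw [hg, hrt, hx', add_sub_cancel_left, add_sub_cancel_left, mul_div_cancel_right₀ _ hdpos.ne']
  have hsg : Real.sqrt (1 - g t ^ 2) = b t := by
    rw [hgt, show 1 - (deriv f t * b t) ^ 2 = b t ^ 2 by linarith [hbsq t],
      Real.sqrt_sq (hbpos t).le]
  have hrpos : 0 < R + d t := by linarith
  rw [hsg, hgt, hrt]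
  refine ⟨?_, ?_⟩
  · have Hf := (hf1 t).hasDerivAt
    have Hp := (hp1 t).hasDerivAt
    have Hb := (hbd t).hasDerivAt
    have Hd := hdd.hasDerivAt
    have Hx : HasDerivAt x (1 + ((deriv (deriv f) t * b t + deriv f t * deriv b t) * d t
        + deriv f t * b t * deriv d t)) t := by
      rw [funext hx']
      exact (hasDerivAt_id' t).fun_add ((Hp.fun_mul Hb).fun_mul Hd)
    have Hy : HasDerivAt y (deriv f t - (deriv b t * d t + b t * deriv d t)) t := by
      rw [funext hy']
      exact Hf.fun_sub (Hb.fun_mul Hd)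
    have E1 : 2 * (x t * deriv x t + y t * deriv y t) = 2 * ((R + d t) * deriv d t) := by
      have A := (Hx.differentiableAt.hasDerivAt.fun_pow 2).fun_add
        (Hy.differentiableAt.hasDerivAt.fun_pow 2)
      have B := (Hd.const_add R).fun_pow 2
      have hev : (fun s => x s ^ 2 + y s ^ 2) =ᶠ[nhds t] (fun s => (R + d s) ^ 2) := by
        filter_upwards [(hαd.continuous.tendsto t).eventually_lt_const ht'] with s hs
        exact hsq s hs
      have C := A.unique (B.congr_of_eventuallyEq hev)
      norm_num at C
      linarith
    have E2 : 2 * (deriv f t * b t) * (deriv (deriv f) t * b t + deriv f t * deriv b t)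
        + 2 * b t * deriv b t = 0 := by
      have A := ((Hp.fun_mul Hb).fun_pow 2).fun_add (Hb.fun_pow 2)
      rw [funext hbsq] at A
      have C := A.unique (hasDerivAt_const t (1 : ℝ))
      norm_num at C
      linarith
    have E3 : deriv f t * b t * deriv x t - b t * deriv y t = deriv d t := by
      rw [Hx.deriv, Hy.deriv]
      linear_combination (d t / 2) * E2 + deriv d t * hbsq t
    field_simp
    linear_combination (R + d t) * E3 - E1 / 2
  · have : b t + y t / (R + d t) = (b t * R + f t) / (R + d t) := by
      rw [hy']; field_simp; ring
    rw [this]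
    have := hbpos t
    have := hfpos t
    positivity

end
end

section
/- Let f : ℝ → ℝ be positive-valued, convex and continuously differentiable, R > 0, t² + f(t)² > R² for all t, and let x(t), y(t) be the equidistant parameterization on the admissible domain D = {t : α(t) < R}. Then for every t ∈ D: x(t)² + y(t)² > R², |x(t) − t| < √(x(t)²+y(t)²) − R, and f and f' are recovered from the parameterization by f(t) = y(t) + √((√(x(t)²+y(t)²) − R)² − (x(t) − t)²) and f'(t) = (x(t) − t)/√((√(x(t)²+y(t)²) − R)² − (x(t) − t)²). -/
open Metric Set

noncomputable section

theorem stmt16 (f : ℝ → ℝ) (hfpos : ∀ t, 0 < f t)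
    (hfconv : ConvexOn ℝ Set.univ f) (hfC1 : ContDiff ℝ 1 f)
    (R : ℝ) (hR : 0 < R)
    (hsep : ∀ t : ℝ, R ^ 2 < t ^ 2 + f t ^ 2)
    (α : ℝ → ℝ)
    (hα : ∀ s : ℝ, α s = (s * deriv f s - f s) / Real.sqrt (1 + deriv f s ^ 2))
    (D : Set ℝ) (hD : D = {t : ℝ | α t < R})
    (x y : ℝ → ℝ)
    (hx : ∀ t : ℝ, x t = t + deriv f t / (2 * Real.sqrt (1 + deriv f t ^ 2)) *
        ((t ^ 2 + f t ^ 2 - R ^ 2) / (R - α t)))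
    (hy : ∀ t : ℝ, y t = f t - 1 / (2 * Real.sqrt (1 + deriv f t ^ 2)) *
        ((t ^ 2 + f t ^ 2 - R ^ 2) / (R - α t))) :
    ∀ t ∈ D,
      R ^ 2 < x t ^ 2 + y t ^ 2 ∧
      |x t - t| < Real.sqrt (x t ^ 2 + y t ^ 2) - R ∧
      f t = y t + Real.sqrt ((Real.sqrt (x t ^ 2 + y t ^ 2) - R) ^ 2 - (x t - t) ^ 2) ∧
      deriv f t =
        (x t - t) / Real.sqrt ((Real.sqrt (x t ^ 2 + y t ^ 2) - R) ^ 2 - (x t - t) ^ 2) := by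
  intro t ht
  rw [hD] at ht
  have ha : α t < R := ht
  have hs0 : 0 < Real.sqrt (1 + deriv f t ^ 2) := Real.sqrt_pos.mpr (by positivity)
  have hs2 : Real.sqrt (1 + deriv f t ^ 2) ^ 2 = 1 + deriv f t ^ 2 :=
    Real.sq_sqrt (by positivity)
  have hat := hα t
  have hxt := hx t
  have hyt := hy t
  have hst := hsep t
  generalize Real.sqrt (1 + deriv f t ^ 2) = s at *
  generalize deriv f t = p at *
  generalize α t = a at *
  generalize f t = F at *
  have hRa : 0 < R - a := sub_pos.mpr ha
  obtain ⟨u, hu⟩ : ∃ u, u = (t ^ 2 + F ^ 2 - R ^ 2) / (R - a) / (2 * s) := ⟨_, rfl⟩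
  have hu0 : 0 < u := by
    rw [hu]; exact div_pos (div_pos (by linarith) hRa) (by linarith)
  have hX : x t = t + p * u := by rw [hxt, hu]; field_simp
  have hY : y t = F - u := by rw [hyt, hu]; field_simp
  have hE : 2 * s * u * (R - a) = t ^ 2 + F ^ 2 - R ^ 2 := by
    rw [hu]; field_simp
  have hA : a * s = t * p - F := by rw [hat]; field_simp
  have hsu : 0 < s * u := mul_pos hs0 hu0
  have key : x t ^ 2 + y t ^ 2 = (R + s * u) ^ 2 := by
    rw [hX, hY]
    linear_combination (-1) * hE - 2 * u * hA - u ^ 2 * hs2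
  have hsq : Real.sqrt (x t ^ 2 + y t ^ 2) = R + s * u := by
    rw [key]; exact Real.sqrt_sq (by positivity)
  have h2 : Real.sqrt ((R + s * u - R) ^ 2 - (x t - t) ^ 2) = u := by
    have : (R + s * u - R) ^ 2 - (x t - t) ^ 2 = u ^ 2 := by
      rw [hX]; linear_combination u ^ 2 * hs2
    rw [this]; exact Real.sqrt_sq hu0.le
  rw [hsq, h2]
  refine ⟨?_, ?_, ?_, ?_⟩
  · rw [key]; nlinarith [mul_pos hR hsu]
  · have hps : |p| < s := abs_lt_of_sq_lt_sq (by linarith) hs0.le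
    rw [hX, add_sub_cancel_left, add_sub_cancel_left, abs_mul, abs_of_pos hu0]
    exact mul_lt_mul_of_pos_right hps hu0
  · rw [hY]; ring
  · rw [hX]; field_simp; ring

end
end

section
/- Let f : ℝ → ℝ be positive-valued, convex and twice continuously differentiable, R > 0, t² + f(t)² > R² for all t, and let the admissible domain be the open interval D = (t₀⁻, t₀⁺) = {t : α(t) < R}. Then the first component of the equidistant parameterization, x : D → ℝ, x(t) = t + (f'(t)/(2√(1+f'(t)²)))·(t² + f(t)² − R²)/(R − α(t)), is a bijection from D onto ℝ and its derivative is everywhere strictly positive; explicitly, x'(t) = (1/2)·f''(t)(t²+f(t)²−R²)(R+f(t)√(1+f'(t)²))/((1+f'(t)²)^{3/2}(R−α(t))²) + (R+f(t)√(1+f'(t)²))/(R−α(t)) > 0. -/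
open Metric Set

noncomputable section

def auxS (f : ℝ → ℝ) (t : ℝ) : ℝ := Real.sqrt (1 + deriv f t ^ 2)
def auxA (f : ℝ → ℝ) (t : ℝ) : ℝ := (t * deriv f t - f t) / auxS f t
def auxX (f : ℝ → ℝ) (R t : ℝ) : ℝ :=
  t + deriv f t / (2 * auxS f t) * ((t ^ 2 + f t ^ 2 - R ^ 2) / (R - auxA f t))

lemma auxS_pos (f : ℝ → ℝ) (t : ℝ) : 0 < auxS f t := by
  unfold auxS; positivity

lemma auxS_sq (f : ℝ → ℝ) (t : ℝ) : auxS f t ^ 2 = 1 + deriv f t ^ 2 := by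
  unfold auxS; rw [Real.sq_sqrt]; positivity

section
variable {f : ℝ → ℝ} (h2 : ContDiff ℝ 2 f)

lemma aux_d1 (h2 : ContDiff ℝ 2 f) (t : ℝ) : HasDerivAt f (deriv f t) t :=
  (h2.differentiable (by norm_num) t).hasDerivAt

lemma aux_d2 (h2 : ContDiff ℝ 2 f) (t : ℝ) : HasDerivAt (deriv f) (deriv (deriv f) t) t := by
  have h : ContDiff ℝ 1 (deriv f) := by
    have : ContDiff ℝ (1 + 1) f := by norm_num; exact h2
    exact (contDiff_succ_iff_deriv.1 this).2.2
  exact (h.differentiable (by norm_num) t).hasDerivAt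

lemma aux_dS (h2 : ContDiff ℝ 2 f) (t : ℝ) :
    HasDerivAt (auxS f) (deriv f t * deriv (deriv f) t / auxS f t) t := by
  have hs := auxS_pos f t
  have h0 : HasDerivAt (fun t => 1 + deriv f t ^ 2) (2 * deriv f t * deriv (deriv f) t) t :=
    (((aux_d2 h2 t).pow 2).const_add 1).congr_deriv (by norm_num)
  have h := h0.sqrt (by positivity)
  unfold auxS at *
  refine h.congr_deriv ?_
  field_simp

lemma aux_dA (h2 : ContDiff ℝ 2 f) (t : ℝ) :
    HasDerivAt (auxA f) (deriv (deriv f) t * (t + f t * deriv f t) / auxS f t ^ 3) t := by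
  have hs := auxS_pos f t
  have h := (((hasDerivAt_id t).mul (aux_d2 h2 t)).sub (aux_d1 h2 t)).div (aux_dS h2 t) hs.ne'
  have e := auxS_sq f t
  unfold auxA
  refine h.congr_deriv ?_
  simp only [id, Pi.sub_apply, Pi.mul_apply]
  field_simp
  rw [e]; ring

lemma aux_dX (h2 : ContDiff ℝ 2 f) (R t : ℝ) (ht : auxA f t < R) :
    HasDerivAt (auxX f R) ((1 / 2) * (deriv (deriv f) t * (t ^ 2 + f t ^ 2 - R ^ 2) *
                (R + f t * auxS f t)) / (auxS f t ^ 3 * (R - auxA f t) ^ 2) +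
            (R + f t * auxS f t) / (R - auxA f t)) t := by
  have hs := auxS_pos f t
  have hW : R - auxA f t ≠ 0 := by linarith
  have hN := (((hasDerivAt_id t).pow 2).add ((aux_d1 h2 t).pow 2)).sub_const (R ^ 2)
  have h := (hasDerivAt_id t).add (((aux_d2 h2 t).div ((aux_dS h2 t).const_mul 2)
    (by positivity)).mul (hN.div ((aux_dA h2 t).const_sub R) hW))
  have e := auxS_sq f t
  unfold auxX
  refine h.congr_deriv ?_
  simp only [id, Pi.add_apply, Pi.pow_apply, Pi.div_apply]
  have ea : auxS f t * auxA f t = t * deriv f t - f t := by unfold auxA; field_simp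
  generalize auxA f t = a at *
  generalize auxS f t = s at *
  generalize deriv (deriv f) t = q at *
  generalize deriv f t = p at *
  have ef : f t = t * p - s * a := by linarith
  rw [ef]
  have hp : p ^ 2 = s ^ 2 - 1 := by linarith
  field_simp
  have h3 : p ^ 3 = (s ^ 2 - 1) * p := by rw [← hp]; ring
  have h4 : p ^ 4 = (s ^ 2 - 1) ^ 2 := by rw [← hp]; ring
  ring_nf
  have h5 : p ^ 5 = (s ^ 2 - 1) ^ 2 * p := by rw [← hp]; ring
  simp only [hp, h3, h4, h5]
  ring

lemma aux_mono (h2 : ContDiff ℝ 2 f) (hc : ConvexOn ℝ univ f) : Monotone (deriv f) := by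
  have := hc.monotoneOn_deriv (fun x _ => (aux_d1 h2 x).differentiableAt)
  exact fun a b h => this (mem_univ _) (mem_univ _) h

lemma aux_q (h2 : ContDiff ℝ 2 f) (hc : ConvexOn ℝ univ f) (t : ℝ) : 0 ≤ deriv (deriv f) t :=
  (aux_mono h2 hc).deriv_nonneg

lemma aux_g (h2 : ContDiff ℝ 2 f) (hc : ConvexOn ℝ univ f) (hp : ∀ t, 0 < f t) :
    Monotone (fun t => t + f t * deriv f t) := by
  have h : ∀ t, HasDerivAt (fun t => t + f t * deriv f t)
      (1 + (deriv f t * deriv f t + f t * deriv (deriv f) t)) t := fun t =>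
    (hasDerivAt_id t).add ((aux_d1 h2 t).mul (aux_d2 h2 t))
  apply monotone_of_deriv_nonneg (fun t => (h t).differentiableAt)
  intro t
  rw [(h t).deriv]
  have := mul_nonneg (hp t).le (aux_q h2 hc t)
  nlinarith [mul_self_nonneg (deriv f t)]

lemma aux_zero (hp : ∀ t, 0 < f t) : auxA f 0 < 0 := by
  unfold auxA
  apply div_neg_of_neg_of_pos _ (auxS_pos f 0)
  linarith [hp 0]

lemma aux_contA (h2 : ContDiff ℝ 2 f) : Continuous (auxA f) :=
  continuous_iff_continuousAt.2 fun t => (aux_dA h2 t).continuousAt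

lemma aux_quasi (h2 : ContDiff ℝ 2 f) (hc : ConvexOn ℝ univ f) (hp : ∀ t, 0 < f t)
    {a u b : ℝ} (hau : a ≤ u) (hub : u ≤ b) : auxA f u ≤ max (auxA f a) (auxA f b) := by
  rcases le_total 0 (u + f u * deriv f u) with h | h
  · apply le_max_of_le_right
    have : MonotoneOn (auxA f) (Icc u b) := by
      apply monotoneOn_of_deriv_nonneg (convex_Icc _ _) (aux_contA h2).continuousOn
        (fun t _ => (aux_dA h2 t).differentiableAt.differentiableWithinAt)
      intro t ht
      rw [interior_Icc] at ht
      rw [(aux_dA h2 t).deriv]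
      have h1 : u + f u * deriv f u ≤ t + f t * deriv f t := aux_g h2 hc hp ht.1.le
      exact div_nonneg (mul_nonneg (aux_q h2 hc t) (by linarith)) (pow_pos (auxS_pos f t) 3).le
    exact this ⟨le_rfl, hub⟩ ⟨hub, le_rfl⟩ hub
  · apply le_max_of_le_left
    have : AntitoneOn (auxA f) (Icc a u) := by
      apply antitoneOn_of_deriv_nonpos (convex_Icc _ _) (aux_contA h2).continuousOn
        (fun t _ => (aux_dA h2 t).differentiableAt.differentiableWithinAt)
      intro t ht
      rw [interior_Icc] at ht
      rw [(aux_dA h2 t).deriv]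
      have h1 : t + f t * deriv f t ≤ u + f u * deriv f u := aux_g h2 hc hp ht.2.le
      exact div_nonpos_of_nonpos_of_nonneg
        (mul_nonpos_of_nonneg_of_nonpos (aux_q h2 hc t) (by linarith)) (pow_pos (auxS_pos f t) 3).le
    exact this ⟨le_rfl, hau⟩ ⟨hau, le_rfl⟩ hau

lemma aux_ord (h2 : ContDiff ℝ 2 f) (hc : ConvexOn ℝ univ f) (hp : ∀ t, 0 < f t) (R : ℝ) :
    OrdConnected {t | auxA f t < R} :=
  ⟨fun _ ha _ hb _ hu => (aux_quasi h2 hc hp hu.1 hu.2).trans_lt (max_lt ha hb)⟩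

lemma aux_large (h2 : ContDiff ℝ 2 f) (hc : ConvexOn ℝ univ f) (hp : ∀ t, 0 < f t) {R : ℝ}
    (hR : 0 < R) (hsep : ∀ t : ℝ, R ^ 2 < t ^ 2 + f t ^ 2) {t : ℝ} (ht : auxA f t < R)
    (h0 : 0 ≤ t) (hT : -deriv f 0 * f 0 ≤ t) : t / 2 ≤ auxX f R t := by
  have hs := auxS_pos f t
  have hN := hsep t
  have hW : 0 < R - auxA f t := by linarith
  rcases le_or_gt 0 (deriv f t) with h | h
  · have : 0 ≤ deriv f t / (2 * auxS f t) * ((t ^ 2 + f t ^ 2 - R ^ 2) / (R - auxA f t)) := by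
      apply mul_nonneg (by positivity)
      exact div_nonneg (by linarith) hW.le
    unfold auxX; linarith
  · have h1 : deriv f 0 ≤ deriv f t := aux_mono h2 hc h0
    have h3 : f t ≤ f 0 := by
      have : AntitoneOn f (Icc 0 t) := by
        apply antitoneOn_of_deriv_nonpos (convex_Icc _ _) h2.continuous.continuousOn
          (fun t _ => (aux_d1 h2 t).differentiableAt.differentiableWithinAt)
        intro u hu
        rw [interior_Icc] at hu
        exact (aux_mono h2 hc hu.2.le).trans h.le
      exact this ⟨le_rfl, h0⟩ ⟨h0, le_rfl⟩ h0
    have h4 : -deriv f t * f t ≤ t := by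
      refine le_trans ?_ hT
      apply mul_le_mul (by linarith) h3 (hp t).le (by linarith)
    have ea : auxS f t * auxA f t = t * deriv f t - f t := by unfold auxA; field_simp
    have hsW : 0 < auxS f t * (R - auxA f t) := mul_pos hs hW
    have e : auxX f R t - t / 2 = (t * (auxS f t * (R - auxA f t)) +
        deriv f t * (t ^ 2 + f t ^ 2 - R ^ 2)) / (2 * (auxS f t * (R - auxA f t))) := by
      unfold auxX; field_simp; ring
    have : 0 ≤ auxX f R t - t / 2 := by
      rw [e]
      apply div_nonneg _ (by linarith)
      have e2 : auxS f t * (R - auxA f t) = auxS f t * R - (t * deriv f t - f t) := by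
        rw [← ea]; ring
      rw [e2]
      have a1 : 0 ≤ t * (auxS f t * R) := by positivity
      have a2 := mul_nonneg (hp t).le (sub_nonneg.2 h4)
      nlinarith [mul_nonneg (neg_pos.2 h).le (sq_nonneg R)]
    linarith

open Filter Topology in
lemma aux_unb (h2 : ContDiff ℝ 2 f) (hc : ConvexOn ℝ univ f) (hp : ∀ t, 0 < f t) {R : ℝ}
    (hR : 0 < R) (hsep : ∀ t : ℝ, R ^ 2 < t ^ 2 + f t ^ 2) (M : ℝ) :
    ∃ t, auxA f t < R ∧ M ≤ auxX f R t := by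
  have hD0 : auxA f 0 < R := (aux_zero hp).trans hR
  by_cases hb : BddAbove {t | auxA f t < R}
  · set b := sSup {t | auxA f t < R} with hbdef
    have hopen : IsOpen {t | auxA f t < R} := isOpen_lt (aux_contA h2) continuous_const
    have hne : {t | auxA f t < R}.Nonempty := ⟨0, hD0⟩
    have hbn : R ≤ auxA f b := by
      by_contra hlt
      rw [not_le] at hlt
      obtain ⟨c, hc1, hc2⟩ := (Filter.nonempty_of_mem (inter_mem
        (mem_nhdsWithin_of_mem_nhds (hopen.mem_nhds hlt)) (self_mem_nhdsWithin (s := Ioi b))))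
      exact absurd (le_csSup hb hc1) (not_le.2 hc2)
    have h0b : 0 < b := by
      refine lt_of_le_of_ne (le_csSup hb hD0) ?_
      intro h; rw [← h] at hbn; linarith
    have hin : ∀ t ∈ Ioo 0 b, auxA f t < R := by
      intro t ht
      obtain ⟨c, hc1, hc2⟩ := exists_lt_of_lt_csSup hne ht.2
      exact (aux_ord h2 hc hp R).out hD0 hc1 ⟨ht.1.le, hc2.le⟩
    have hev : ∀ᶠ t in 𝓝[<] b, auxA f t < R := by
      filter_upwards [Ioo_mem_nhdsLT h0b] with t ht using hin t ht
    have hAt : Tendsto (auxA f) (𝓝[<] b) (𝓝 (auxA f b)) :=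
      ((aux_contA h2).tendsto b).mono_left nhdsWithin_le_nhds
    have hbe : auxA f b = R := le_antisymm (le_of_tendsto hAt (hev.mono fun t h => h.le)) hbn
    have hs := auxS_pos f b
    have hpp : 0 < deriv f b := by
      have ea : auxS f b * auxA f b = b * deriv f b - f b := by unfold auxA; field_simp
      rw [hbe] at ea
      have : 0 < b * deriv f b := by nlinarith [hp b, mul_pos hs hR]
      exact pos_of_mul_pos_right this h0b.le
    have hden : Tendsto (fun t => (R - auxA f t)⁻¹) (𝓝[<] b) atTop := by
      apply Tendsto.inv_tendsto_nhdsGT_zero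
      apply tendsto_nhdsWithin_iff.2
      constructor
      · have := hAt.const_sub R
        rwa [hbe, sub_self] at this
      · exact hev.mono fun t h => sub_pos.2 h
    have hk : Tendsto (fun t => deriv f t / (2 * auxS f t) * (t ^ 2 + f t ^ 2 - R ^ 2)) (𝓝[<] b)
        (𝓝 (deriv f b / (2 * auxS f b) * (b ^ 2 + f b ^ 2 - R ^ 2))) := by
      apply Tendsto.mono_left _ nhdsWithin_le_nhds
      have c1 := (aux_d1 h2 b).continuousAt.tendsto
      have c2 := (aux_d2 h2 b).continuousAt.tendsto
      have c3 := (aux_dS h2 b).continuousAt.tendsto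
      exact (c2.div (c3.const_mul 2) (by positivity)).mul
        (((tendsto_id.pow 2).add (c1.pow 2)).sub_const _)
    have hkp : 0 < deriv f b / (2 * auxS f b) * (b ^ 2 + f b ^ 2 - R ^ 2) :=
      mul_pos (by positivity) (by linarith [hsep b])
    have hlim := (hk.pos_mul_atTop hkp hden)
    obtain ⟨t, h1, h3, h4⟩ := ((hlim.eventually_ge_atTop M).and
      (Filter.Eventually.and (Ioo_mem_nhdsLT h0b) hev)).exists
    refine ⟨t, h4, ?_⟩
    have h30 := h3.1
    have e : auxX f R t = t + deriv f t / (2 * auxS f t) * (t ^ 2 + f t ^ 2 - R ^ 2) *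
      (R - auxA f t)⁻¹ := by unfold auxX; rw [div_eq_mul_inv _ (R - auxA f t)]; ring
    rw [e]; linarith
  · rw [not_bddAbove_iff] at hb
    obtain ⟨t, h1, h3⟩ := hb (max 0 (max (-deriv f 0 * f 0) (2 * M)))
    simp only [max_lt_iff] at h3
    exact ⟨t, h1, by linarith [aux_large h2 hc hp hR hsep h1 h3.1.le h3.2.1.le]⟩

lemma aux_unb' (h2 : ContDiff ℝ 2 f) (hc : ConvexOn ℝ univ f) (hp : ∀ t, 0 < f t) {R : ℝ}
    (hR : 0 < R) (hsep : ∀ t : ℝ, R ^ 2 < t ^ 2 + f t ^ 2) (M : ℝ) :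
    ∃ t, auxA f t < R ∧ auxX f R t ≤ M := by
  have hd : ∀ t, deriv (fun t => f (-t)) t = -deriv f (-t) := fun t => deriv_comp_neg f t
  have hS : ∀ t, auxS (fun t => f (-t)) t = auxS f (-t) := by
    intro t; unfold auxS; rw [hd]; simp
  have hA : ∀ t, auxA (fun t => f (-t)) t = auxA f (-t) := by
    intro t; unfold auxA; rw [hd, hS]; simp
  have hX : ∀ t, auxX (fun t => f (-t)) R t = - auxX f R (-t) := by
    intro t; unfold auxX; rw [hd, hS, hA]; ring
  obtain ⟨t, h1, h3⟩ := aux_unb (f := fun t => f (-t)) (h2.comp contDiff_neg)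
    (by
      refine ⟨convex_univ, fun x _ y _ a b ha hb hab => ?_⟩
      have := hc.2 (mem_univ (-x)) (mem_univ (-y)) ha hb hab
      simp only [smul_eq_mul] at this ⊢
      convert this using 2
      ring)
    (fun t => hp _) hR (fun t => by simpa using hsep (-t)) (-M)
  rw [hA] at h1
  rw [hX] at h3
  exact ⟨-t, h1, by linarith⟩

end

theorem stmt17 (f : ℝ → ℝ) (hfpos : ∀ t, 0 < f t)
    (hfconv : ConvexOn ℝ Set.univ f) (hfC2 : ContDiff ℝ 2 f)
    (R : ℝ) (hR : 0 < R)
    (hsep : ∀ t : ℝ, R ^ 2 < t ^ 2 + f t ^ 2)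
    (α : ℝ → ℝ)
    (hα : ∀ s : ℝ, α s = (s * deriv f s - f s) / Real.sqrt (1 + deriv f s ^ 2))
    (D : Set ℝ) (hD : D = {t : ℝ | α t < R})
    (x : ℝ → ℝ)
    (hx : ∀ t : ℝ, x t = t + deriv f t / (2 * Real.sqrt (1 + deriv f t ^ 2)) *
        ((t ^ 2 + f t ^ 2 - R ^ 2) / (R - α t))) :
    Set.BijOn x D Set.univ ∧
      ∀ t ∈ D,
        deriv x t =
            (1 / 2) * (deriv (deriv f) t * (t ^ 2 + f t ^ 2 - R ^ 2) *
                (R + f t * Real.sqrt (1 + deriv f t ^ 2))) /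
              ((1 + deriv f t ^ 2) ^ ((3 : ℝ) / 2) * (R - α t) ^ 2) +
            (R + f t * Real.sqrt (1 + deriv f t ^ 2)) / (R - α t) ∧
          0 < deriv x t := by
  obtain rfl : α = auxA f := funext hα
  obtain rfl : x = auxX f R := funext hx
  subst hD
  have hpos : ∀ t ∈ {t | auxA f t < R}, 0 < deriv (auxX f R) t := by
    intro t ht
    have ht' : auxA f t < R := ht
    rw [(aux_dX hfC2 R t ht).deriv]
    have hs := auxS_pos f t
    have hf := hfpos t
    have hW : 0 < R - auxA f t := by linarith
    have hN : 0 ≤ t ^ 2 + f t ^ 2 - R ^ 2 := by linarith [hsep t]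
    have hq := aux_q hfC2 hfconv t
    positivity
  have hconv : Convex ℝ {t | auxA f t < R} := (aux_ord hfC2 hfconv hfpos R).convex
  have hcont : ContinuousOn (auxX f R) {t | auxA f t < R} := fun t ht =>
    (aux_dX hfC2 R t ht).continuousAt.continuousWithinAt
  refine ⟨⟨fun _ _ => mem_univ _, ?_, ?_⟩, ?_⟩
  · exact (strictMonoOn_of_deriv_pos hconv hcont fun t ht => hpos t (interior_subset ht)).injOn
  · intro y _
    obtain ⟨a, ha, ha'⟩ := aux_unb' hfC2 hfconv hfpos hR hsep y
    obtain ⟨b, hb, hb'⟩ := aux_unb hfC2 hfconv hfpos hR hsep y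
    exact hconv.isPreconnected.intermediate_value ha hb hcont ⟨ha', hb'⟩
  · intro t ht
    refine ⟨?_, hpos t ht⟩
    rw [(aux_dX hfC2 R t ht).deriv]
    have h3 : (1 + deriv f t ^ 2) ^ ((3 : ℝ) / 2) = auxS f t ^ 3 := by
      unfold auxS
      rw [Real.sqrt_eq_rpow, ← Real.rpow_natCast (_ ^ ((1 : ℝ) / 2)) 3, ← Real.rpow_mul (by positivity)]
      norm_num
    rw [h3]
    rfl

end
end

section
/- Let R > 0 and K ⊆ ℝ² be the closed disk of radius R centered at the origin. Let x, y : (t₀⁻, t₀⁺) → ℝ be continuously differentiable functions on an open interval containing 0 such that, setting r(t) := √(x(t)² + y(t)²) and g(t) := (x(t) − t)/(r(t) − R): (i) r(t) > R for all t; (ii) 1 > g(t)² + ((1 − sgn y(t))/2)·y(t)²/(r(t) − R)² for all t (in particular |g(t)| < 1); (iii) t ↦ g(t)/√(1 − g(t)²) is monotone increasing and (g(t) − x(t)/r(t))·x'(t) = (√(1 − g(t)²) + y(t)/r(t))·y'(t) for all t. Then f(t) := y(t) + (r(t) − R)·√(1 − g(t)²) defines a positive-valued convex continuously differentiable function with f'(t)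 = g(t)/√(1−g(t)²), and for every t the point (x(t), y(t)) is equidistant from K and the graph of f, with d((x(t),y(t)), graph f) = r(t) − R attained at (t, f(t)). -/
open Metric Set

noncomputable section

theorem pt2_dist (a b c d : ℝ) :
    dist (pt2 a b) (pt2 c d) = Real.sqrt ((a - c) ^ 2 + (b - d) ^ 2) := by
  rw [WithLp.prod_dist_eq_of_L2]
  simp [pt2, Real.dist_eq, sq_abs]

theorem pt2_zero : pt2 0 0 = (0 : EucPlane) := rfl

theorem pt2_infDist_ball (a b R : ℝ) (hR : 0 < R) (h : R < Real.sqrt (a ^ 2 + b ^ 2)) :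
    Metric.infDist (pt2 a b) (Metric.closedBall (0 : EucPlane) R)
      = Real.sqrt (a ^ 2 + b ^ 2) - R := by
  set r := Real.sqrt (a ^ 2 + b ^ 2) with hr
  have hr0 : 0 < r := hR.trans h
  have hd0 : dist (pt2 a b) (0 : EucPlane) = r := by
    rw [← pt2_zero, pt2_dist]; simp [hr]
  have hsq : r ^ 2 = a ^ 2 + b ^ 2 := Real.sq_sqrt (by positivity)
  apply le_antisymm
  · have hmem : pt2 (R / r * a) (R / r * b) ∈ Metric.closedBall (0 : EucPlane) R := by
      rw [Metric.mem_closedBall, ← pt2_zero, pt2_dist]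
      apply Real.sqrt_le_iff.2
      refine ⟨hR.le, le_of_eq ?_⟩
      have : (R / r * a - 0) ^ 2 + (R / r * b - 0) ^ 2 = (R / r) ^ 2 * (a ^ 2 + b ^ 2) := by ring
      rw [this, ← hsq]; field_simp
    refine (Metric.infDist_le_dist_of_mem hmem).trans ?_
    rw [pt2_dist]
    apply Real.sqrt_le_iff.2
    refine ⟨by linarith, le_of_eq ?_⟩
    have : (a - R / r * a) ^ 2 + (b - R / r * b) ^ 2 = (1 - R / r) ^ 2 * (a ^ 2 + b ^ 2) := by ring
    rw [this, ← hsq]; field_simp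
  · refine (Metric.le_infDist ⟨0, Metric.mem_closedBall_self hR.le⟩).2 ?_
    intro q hq
    rw [Metric.mem_closedBall] at hq
    have := dist_triangle (pt2 a b) q 0
    linarith

theorem stmt18 (R : ℝ) (hR : 0 < R)
    (K : Set EucPlane) (hK : K = Metric.closedBall (0 : EucPlane) R)
    (a b : ℝ) (ha : a < 0) (hb : 0 < b)
    (x y x' y' : ℝ → ℝ)
    (hx : ∀ t ∈ Set.Ioo a b, HasDerivAt x (x' t) t)
    (hy : ∀ t ∈ Set.Ioo a b, HasDerivAt y (y' t) t)
    (hx' : ContinuousOn x' (Set.Ioo a b)) (hy' : ContinuousOn y' (Set.Ioo a b))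
    (r g : ℝ → ℝ)
    (hr : ∀ t : ℝ, r t = Real.sqrt (x t ^ 2 + y t ^ 2))
    (hg : ∀ t : ℝ, g t = (x t - t) / (r t - R))
    (h1 : ∀ t ∈ Set.Ioo a b, R < r t)
    (h2 : ∀ t ∈ Set.Ioo a b,
      g t ^ 2 + (1 - Real.sign (y t)) / 2 * (y t ^ 2 / (r t - R) ^ 2) < 1)
    (h3mono : MonotoneOn (fun t => g t / Real.sqrt (1 - g t ^ 2)) (Set.Ioo a b))
    (h3comp : ∀ t ∈ Set.Ioo a b,
      (g t - x t / r t) * x' t = (Real.sqrt (1 - g t ^ 2) + y t / r t) * y' t)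
    (f : ℝ → ℝ)
    (hf : ∀ t : ℝ, f t = y t + (r t - R) * Real.sqrt (1 - g t ^ 2)) :
    (∀ t ∈ Set.Ioo a b, 0 < f t) ∧
    ConvexOn ℝ (Set.Ioo a b) f ∧
    (∀ t ∈ Set.Ioo a b, HasDerivAt f (g t / Real.sqrt (1 - g t ^ 2)) t) ∧
    ∀ t ∈ Set.Ioo a b,
      Metric.infDist (pt2 (x t) (y t)) K =
          Metric.infDist (pt2 (x t) (y t)) ((fun s => pt2 s (f s)) '' Set.Ioo a b) ∧
      Metric.infDist (pt2 (x t) (y t)) ((fun s => pt2 s (f s)) '' Set.Ioo a b) = r t - R ∧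
      dist (pt2 (x t) (y t)) (pt2 t (f t)) = r t - R := by
  have hA : ∀ t ∈ Set.Ioo a b, 0 < 1 - g t ^ 2 := by
    intro t ht
    have h := h2 t ht
    have hs : 0 ≤ (1 - Real.sign (y t)) / 2 := by
      rcases Real.sign_apply_eq (y t) with h | h | h <;> rw [h] <;> norm_num
    have : 0 ≤ (1 - Real.sign (y t)) / 2 * (y t ^ 2 / (r t - R) ^ 2) := by positivity
    linarith
  have hS : ∀ t ∈ Set.Ioo a b, 0 < Real.sqrt (1 - g t ^ 2) :=
    fun t ht => Real.sqrt_pos.2 (hA t ht)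
  have hS2 : ∀ t ∈ Set.Ioo a b, Real.sqrt (1 - g t ^ 2) ^ 2 = 1 - g t ^ 2 :=
    fun t ht => Real.sq_sqrt (hA t ht).le
  have hgρ : ∀ t ∈ Set.Ioo a b, g t * (r t - R) = x t - t := by
    intro t ht
    have : r t - R ≠ 0 := by linarith [h1 t ht]
    rw [hg t]; field_simp
  have hpos : ∀ t ∈ Set.Ioo a b, 0 < f t := by
    intro t ht
    have hρ : 0 < r t - R := by linarith [h1 t ht]
    have hs := hS t ht
    rw [hf t]
    rcases lt_or_ge (y t) 0 with hy0 | hy0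
    · have h := h2 t ht
      rw [Real.sign_of_neg hy0] at h
      have h' : y t ^ 2 / (r t - R) ^ 2 < Real.sqrt (1 - g t ^ 2) ^ 2 := by
        rw [hS2 t ht]; linarith
      rw [div_lt_iff₀ (by positivity), ← mul_pow] at h'
      have := abs_lt_of_sq_lt_sq h' (by positivity)
      rw [abs_of_neg hy0] at this
      linarith
    · positivity
  have hder : ∀ t ∈ Set.Ioo a b, HasDerivAt f (g t / Real.sqrt (1 - g t ^ 2)) t := by
    intro t ht
    have hρ : 0 < r t - R := by linarith [h1 t ht]
    have hr0 : 0 < r t := by linarith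
    have hrsq : 0 < x t ^ 2 + y t ^ 2 := by
      have := hr t ▸ hr0
      exact Real.sqrt_pos.1 this
    have hrd : HasDerivAt r ((x t * x' t + y t * y' t) / r t) t := by
      have h := (((hx t ht).pow 2).add ((hy t ht).pow 2)).sqrt (by simpa using hrsq.ne')
      have e : r = fun s => Real.sqrt (x s ^ 2 + y s ^ 2) := funext hr
      rw [e]
      refine h.congr_deriv ?_
      have : Real.sqrt (x t ^ 2 + y t ^ 2) ≠ 0 := by rw [← hr t]; exact hr0.ne'
      simp only [Pi.add_apply, Pi.pow_apply]
      field_simp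
      ring
    set ρ' := (x t * x' t + y t * y' t) / r t with hρ'
    have hgd : HasDerivAt g ((x' t - 1 - g t * ρ') / (r t - R)) t := by
      have h := ((hx t ht).sub (hasDerivAt_id t)).div (hrd.sub_const R) hρ.ne'
      have e : g = fun s => (x s - s) / (r s - R) := funext hg
      have e2 := hgρ t ht
      have e3 : g = ((x - id) / fun s => r s - R) := by rw [e]; rfl
      have h' := h
      rw [← e3] at h'
      refine h'.congr_deriv ?_
      simp only [Pi.sub_apply, id]
      rw [← e2]
      field_simp
    have hs := hS t ht
    have hs2 := hS2 t ht
    have hcomp := h3comp t ht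
    have hsd := ((hgd.pow 2).const_sub 1).sqrt (by simpa using (hA t ht).ne')
    have h := (hy t ht).add ((hrd.sub_const R).mul hsd)
    have e : f = fun s => y s + (r s - R) * Real.sqrt (1 - g s ^ 2) := funext hf
    rw [e]
    refine h.congr_deriv ?_
    simp only [Pi.pow_apply]
    have hc : g t * x' t = Real.sqrt (1 - g t ^ 2) * y' t + ρ' := by
      rw [hρ', add_div]
      have e1 : x t * x' t / r t = x t / r t * x' t := by ring
      have e2 : y t * y' t / r t = y t / r t * y' t := by ring
      rw [e1, e2]; linarith
    clear_value ρ'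
    generalize Real.sqrt (1 - g t ^ 2) = s at *
    have hs0 := hs.ne'
    have hρ0 := hρ.ne'
    field_simp
    norm_num
    linear_combination (2 * ρ') * hs2 - 2 * hc
  have hint : interior (Set.Ioo a b) = Set.Ioo a b := interior_Ioo
  have hconv : ConvexOn ℝ (Set.Ioo a b) f := by
    apply MonotoneOn.convexOn_of_deriv (convex_Ioo a b)
    · exact fun t ht => (hder t ht).continuousAt.continuousWithinAt
    · rw [hint]; exact fun t ht => (hder t ht).differentiableAt.differentiableWithinAt
    · rw [hint]; exact h3mono.congr (fun t ht => ((hder t ht).deriv).symm)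
  refine ⟨hpos, hconv, hder, ?_⟩
  intro t ht
  have hρ : 0 < r t - R := by linarith [h1 t ht]
  have hs := hS t ht
  have hs2 := hS2 t ht
  have hgr := hgρ t ht
  have hft := hf t
  have hdist : dist (pt2 (x t) (y t)) (pt2 t (f t)) = r t - R := by
    rw [pt2_dist, ← hgr, hft, ← Real.sqrt_sq hρ.le]
    congr 1
    rw [Real.sqrt_sq hρ.le]
    linear_combination (r t - R) ^ 2 * hs2
  have hinf : Metric.infDist (pt2 (x t) (y t)) ((fun s => pt2 s (f s)) '' Set.Ioo a b)
      = r t - R := by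
    apply le_antisymm
    · rw [← hdist]
      exact Metric.infDist_le_dist_of_mem ⟨t, ht, rfl⟩
    · refine (Metric.le_infDist (Set.Nonempty.image _ ⟨t, ht⟩)).2 ?_
      rintro _ ⟨u, hu, rfl⟩
      simp only
      rw [pt2_dist]
      apply Real.le_sqrt_of_sq_le
      have htan : g t * (u - t) ≤ Real.sqrt (1 - g t ^ 2) * (f u - f t) := by
        have key : g t / Real.sqrt (1 - g t ^ 2) * (u - t) ≤ f u - f t := by
          rcases lt_trichotomy u t with h | h | h
          · have := hconv.slope_le_of_hasDerivAt hu ht h (hder t ht)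
            rw [slope_def_field, div_le_iff₀ (by linarith)] at this
            linarith
          · subst h; simp
          · have := hconv.le_slope_of_hasDerivAt ht hu h (hder t ht)
            rw [slope_def_field, le_div_iff₀ (by linarith)] at this
            linarith
        have := mul_le_mul_of_nonneg_left key hs.le
        have e : Real.sqrt (1 - g t ^ 2) * (g t / Real.sqrt (1 - g t ^ 2) * (u - t))
            = g t * (u - t) := by field_simp
        linarith
      generalize Real.sqrt (1 - g t ^ 2) = s at *
      have hle : r t - R ≤ g t * (x t - u) + s * (f u - y t) := by
        have e : g t * (x t - u) + s * (f u - y t)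
            = (r t - R) + (s * (f u - f t) - g t * (u - t)) := by
          linear_combination -g t * hgr + s * hft + (r t - R) * hs2
        linarith
      have h1' : (r t - R) ^ 2 ≤ (g t * (x t - u) + s * (f u - y t)) ^ 2 :=
        pow_le_pow_left₀ hρ.le hle 2
      have e : (x t - u) ^ 2 + (y t - f u) ^ 2 = (g t * (x t - u) + s * (f u - y t)) ^ 2
          + (s * (x t - u) - g t * (f u - y t)) ^ 2 := by
        linear_combination -((x t - u) ^ 2 + (y t - f u) ^ 2) * hs2
      rw [e]
      nlinarith [sq_nonneg (s * (x t - u) - g t * (f u - y t))]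
  refine ⟨?_, hinf, hdist⟩
  rw [hinf, hK, hr t]
  exact pt2_infDist_ball _ _ R hR (hr t ▸ h1 t ht)

end
end
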